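/- Let m ≥ 1 and 0 ≤ a ≤ m−1 be integers and q, x complex numbers with |q| < 1 and |x| < 1. Define H_m^{(a)}(x) = Σ_{k₁,…,k_m ≥ 0} (x;q)_{k_m+1} · x^{k_m} · (∏_{i=1}^{a−1} q^{k_i²} x^{2k_i} [k_{i+1} choose k_i]_q) · q^{k_a²} x^{2k_a} [k_{a+1}+1 choose k_a]_q · (∏_{i=a+1}^{m−1} q^{k_i²+k_i} x^{2k_i} [k_{i+1} choose k_i]_q), with the convention k₀ = 0 when a = 0 (so the middle factor equals 1). Then H_m^{(a)}(x) = Σ_{n=0}^∞ χ_{8m+4}^{(a)}(n) · q^{(n² − (2m−2a−1)²)/(8(2m+1))} · x^{(n − (2m−2a−1))/2}, where on the right only n ≡ ±(2m−2a−1), ±(2m+2a+3) (mod 8m+4) contribute, so that all exponents are nonnegative integers, and both series converge absolutely. -/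

import Mathlib

/-- The finite q-Pochhammer symbol `(x;q)_n = ∏_{i=1}^n (1 - x q^{i-1})`. -/
noncomputable def qPoch (q x : ℂ) (n : ℕ) : ℂ := ∏ i ∈ Finset.range n, (1 - x * q ^ i)

/-- The Gaussian binomial coefficient `[n choose c]_q`. -/
noncomputable def qBinom (q : ℂ) (n c : ℕ) : ℂ :=
  if c ≤ n then qPoch q q n / (qPoch q q c * qPoch q q (n - c)) else 0

/-- The (8m+4)-periodic function `χ_{8m+4}^{(a)}`. -/
def chiGen (m a n : ℕ) : ℤ :=
  if n % (8 * m + 4) = (2 * m - 2 * a - 1) % (8 * m + 4) then 1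
  else if n % (8 * m + 4) = (6 * m + 2 * a + 5) % (8 * m + 4) then 1
  else if n % (8 * m + 4) = (2 * m + 2 * a + 3) % (8 * m + 4) then -1
  else if n % (8 * m + 4) = (6 * m - 2 * a + 1) % (8 * m + 4) then -1
  else 0

/-- Extends a tuple `(k₁,…,k_m)` to all of `ℕ` by `0` (in particular `k₀ = 0`). -/
def Kfun (m : ℕ) (k : Fin m → ℕ) (i : ℕ) : ℕ :=
  if h : 1 ≤ i ∧ i ≤ m then k ⟨i - 1, by omega⟩ else 0

/-- The summand of the multiple series `H_m^{(a)}(x)`: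
`(x;q)_{k_m+1} x^{k_m} (∏_{i=1}^{a-1} q^{k_i²} x^{2k_i} [k_{i+1},k_i]) ·
 q^{k_a²} x^{2k_a} [k_{a+1}+1,k_a] · (∏_{i=a+1}^{m-1} q^{k_i²+k_i} x^{2k_i} [k_{i+1},k_i])`,
with the convention `k₀ = 0`. -/
noncomputable def Hterm (q x : ℂ) (m a : ℕ) (k : Fin m → ℕ) : ℂ :=
  qPoch q x (Kfun m k m + 1) * x ^ (Kfun m k m) *
  (∏ i ∈ Finset.Ico 1 a,
    q ^ (Kfun m k i ^ 2) * x ^ (2 * Kfun m k i) * qBinom q (Kfun m k (i + 1)) (Kfun m k i)) *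
  (q ^ (Kfun m k a ^ 2) * x ^ (2 * Kfun m k a) *
    qBinom q (Kfun m k (a + 1) + 1) (Kfun m k a)) *
  (∏ i ∈ Finset.Ico (a + 1) m,
    q ^ (Kfun m k i ^ 2 + Kfun m k i) * x ^ (2 * Kfun m k i) *
      qBinom q (Kfun m k (i + 1)) (Kfun m k i))

/-!
With `y = x²`, the `m - 1` inner summations of `H_m^{(a)}(x)` run through a Bailey lattice. The unit
Bailey pair relative to `y` has `β_n = 1 / (q;q)_n` after one step of Bailey's lemma, and each of
the sums over `k_1, …, k_a` is one more step. The shifted binomial `[k_{a+1} + 1 choose k_a]`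
changes the parameter from `y` to `yq` (a summation by parts, which replaces the `α`-sequence by
differences), after which the remaining sums are instances of Bailey's lemma relative to `yq`. The
outer sum over `k_m` pairs the resulting Bailey pair with the conjugate Bailey pair `δ_n =
(x;q)_{n+1} (q;q)_n xⁿ`, whose `γ_r` is evaluated by a telescoping recurrence in `r`. What is left
is a sum over `r` of differences of two monomials, and these are the terms of the theta series in
the residue classes `2m - 2a - 1` and `2m + 2a + 3` modulo `4m + 2`.
-/

section BaileyPairs

open Finset

variable {q x y A : ℂ}

/-- `QGeneric q x` says that no q-Pochhammer symbol `(x;q)_n` vanishes; for `x = q` it says that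
`q` is not a root of unity. It keeps every denominator of the Bailey pair calculus nonzero. -/
def QGeneric (q x : ℂ) : Prop := ∀ n : ℕ, 1 - x * q ^ n ≠ 0

lemma QGeneric.of_norm_lt_one (hq : ‖q‖ ≤ 1) (hx : ‖x‖ < 1) : QGeneric q x := by
  intro n h
  have hlt : ‖x * q ^ n‖ < 1 := by
    rw [norm_mul, norm_pow]
    exact mul_lt_one_of_nonneg_of_lt_one_left (norm_nonneg _) hx
      (pow_le_one₀ (norm_nonneg _) hq)
  simp [← sub_eq_zero.mp h] at hlt

lemma QGeneric.mul_q (hx : QGeneric q x) : QGeneric q (x * q) := fun n => by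
  simpa only [mul_assoc, pow_succ'] using hx (n + 1)

lemma QGeneric.one_sub_ne_zero (hx : QGeneric q x) : 1 - x ≠ 0 := by
  simpa using hx 0

lemma QGeneric.qPoch_ne_zero (hx : QGeneric q x) (n : ℕ) : qPoch q x n ≠ 0 :=
  prod_ne_zero_iff.mpr fun i _ => hx i

lemma QGeneric.one_sub_pow_ne_zero (hq : QGeneric q q) (n : ℕ) : 1 - q ^ (n + 1) ≠ 0 := by
  simpa only [pow_succ'] using hq n

lemma qPoch_zero (q x : ℂ) : qPoch q x 0 = 1 := prod_range_zero _

lemma qPoch_succ (q x : ℂ) (n : ℕ) : qPoch q x (n + 1) = qPoch q x n * (1 - x * q ^ n) :=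
  prod_range_succ _ _

lemma qPoch_add (q x : ℂ) (m n : ℕ) :
    qPoch q x (m + n) = qPoch q x m * qPoch q (x * q ^ m) n := by
  simp only [qPoch, prod_range_add, pow_add, mul_assoc]

lemma qPoch_succ' (q x : ℂ) (n : ℕ) : qPoch q x (n + 1) = (1 - x) * qPoch q (x * q) n := by
  rw [add_comm, qPoch_add, pow_one, qPoch_succ, qPoch_zero, pow_zero, mul_one, one_mul]

lemma qPoch_self_succ (q : ℂ) (n : ℕ) :
    qPoch q q (n + 1) = qPoch q q n * (1 - q ^ (n + 1)) := by
  rw [qPoch_succ, pow_succ']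

lemma qBinom_of_lt {n k : ℕ} (h : n < k) : qBinom q n k = 0 := if_neg h.not_ge

lemma qBinom_zero_right (hq : QGeneric q q) (n : ℕ) : qBinom q n 0 = 1 := by
  simp [qBinom, qPoch_zero, hq.qPoch_ne_zero n]

lemma qBinom_self (hq : QGeneric q q) (n : ℕ) : qBinom q n n = 1 := by
  simp [qBinom, qPoch_zero, hq.qPoch_ne_zero n]

lemma qBinom_add_left (q : ℂ) (k s : ℕ) :
    qBinom q (k + s) k = qPoch q q (k + s) / (qPoch q q k * qPoch q q s) := by
  rw [qBinom, if_pos (Nat.le_add_right k s), Nat.add_sub_cancel_left]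

lemma qBinom_succ_succ (hq : QGeneric q q) (n k : ℕ) :
    qBinom q (n + 1) (k + 1) = q ^ (k + 1) * qBinom q n (k + 1) + qBinom q n k := by
  rcases lt_trichotomy n k with h | rfl | h
  · simp [qBinom_of_lt, h, h.trans (Nat.lt_succ_self k)]
  · simp [qBinom_of_lt, qBinom_self hq]
  · obtain ⟨s, rfl⟩ := Nat.exists_eq_add_of_lt h
    rw [show k + s + 1 + 1 = (k + 1) + (s + 1) by omega, qBinom_add_left,
      show k + s + 1 = k + 1 + s by omega, qBinom_add_left,
      show k + 1 + s = k + (s + 1) by omega, qBinom_add_left,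
      show k + 1 + (s + 1) = k + (s + 1) + 1 by omega, qPoch_self_succ q (k + (s + 1)),
      qPoch_self_succ q k, qPoch_self_succ q s]
    have hk := hq.qPoch_ne_zero k
    have hs := hq.qPoch_ne_zero s
    have hk' := hq.one_sub_pow_ne_zero k
    have hs' := hq.one_sub_pow_ne_zero s
    field_simp
    ring

lemma sum_qBinom_succ_mul (hq : QGeneric q q) (n : ℕ) (f : ℕ → ℂ) :
    ∑ k ∈ range (n + 2), qBinom q (n + 1) k * f k
      = ∑ k ∈ range (n + 1), qBinom q n k * (q ^ k * f k + f (k + 1)) := by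
  have hshift : ∑ k ∈ range (n + 1), q ^ (k + 1) * qBinom q n (k + 1) * f (k + 1) + f 0
      = ∑ k ∈ range (n + 1), q ^ k * qBinom q n k * f k := by
    have := sum_range_succ' (fun k => q ^ k * qBinom q n k * f k) (n + 1)
    rw [sum_range_succ, qBinom_of_lt n.lt_succ_self] at this
    simpa [qBinom_zero_right hq] using this.symm
  rw [sum_range_succ', qBinom_zero_right hq, one_mul]
  simp only [qBinom_succ_succ hq, add_mul, mul_add, sum_add_distrib]
  rw [add_right_comm, hshift]
  simp only [mul_assoc, mul_left_comm]

theorem sum_qBinom_mul_qPoch_eq_one (hq : QGeneric q q) (N : ℕ) (A : ℂ) :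
    ∑ j ∈ range (N + 1),
      qBinom q N j * (A ^ j * q ^ (j ^ 2) * qPoch q (A * q ^ (j + 1)) (N - j)) = 1 := by
  induction N generalizing A with
  | zero => simp [qPoch_zero, qBinom_self hq]
  | succ N ih =>
    rw [sum_qBinom_succ_mul hq, ← ih (A * q)]
    refine sum_congr rfl fun j hj => ?_
    rw [Nat.succ_sub (mem_range_succ_iff.mp hj), Nat.succ_eq_add_one, qPoch_succ',
      Nat.add_sub_add_right, show A * q ^ (j + 1) * q = A * q * q ^ (j + 1) by ring,
      show A * q ^ (j + 1 + 1) = A * q * q ^ (j + 1) by ring]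
    ring

/-- The kernel `1 / ((q;q)_{n-r} (Aq;q)_{n+r})` of the Bailey transform relative to `A`, extended
by zero to `r > n`. -/
noncomputable def baileyKernel (q A : ℂ) (n r : ℕ) : ℂ :=
  if r ≤ n then 1 / (qPoch q q (n - r) * qPoch q (A * q) (n + r)) else 0

lemma baileyKernel_of_lt {n r : ℕ} (h : n < r) : baileyKernel q A n r = 0 := if_neg h.not_ge

lemma baileyKernel_add_left (q A : ℂ) (r s : ℕ) :
    baileyKernel q A (r + s) r = 1 / (qPoch q q s * qPoch q (A * q) (r + s + r)) := by
  rw [baileyKernel, if_pos (Nat.le_add_right r s), Nat.add_sub_cancel_left]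

lemma baileyKernel_succ_left (hq : QGeneric q q) (hA : QGeneric q (A * q)) (n r : ℕ) :
    (1 - q ^ (n + 1 - r)) * (1 - A * q * q ^ (n + r)) * baileyKernel q A (n + 1) r
      = baileyKernel q A n r := by
  rcases lt_or_ge n r with h | h
  · rcases (Nat.succ_le_of_lt h).eq_or_lt with rfl | h'
    · simp [baileyKernel_of_lt]
    · rw [baileyKernel_of_lt h, baileyKernel_of_lt h', mul_zero]
  · obtain ⟨s, rfl⟩ := Nat.exists_eq_add_of_le h
    rw [show r + s + 1 - r = s + 1 by omega, baileyKernel_add_left, add_assoc r s 1,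
      baileyKernel_add_left, qPoch_self_succ,
      show r + (s + 1) + r = r + s + r + 1 by omega, qPoch_succ]
    have hs := hq.one_sub_pow_ne_zero s
    have hrs := hA (r + s + r)
    generalize 1 - q ^ (s + 1) = u, 1 - A * q * q ^ (r + s + r) = v at *
    field_simp

lemma baileyKernel_succ_right (hq : QGeneric q q) (hA : QGeneric q (A * q)) (n r : ℕ) :
    (1 - A * q * q ^ (n + r)) * baileyKernel q A n (r + 1)
      = (1 - q ^ (n - r)) * baileyKernel q A n r := by
  rcases le_or_gt n r with h | h
  · simp [baileyKernel_of_lt (Nat.lt_succ_of_le h), Nat.sub_eq_zero_of_le h]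
  · obtain ⟨s, rfl⟩ := Nat.exists_eq_add_of_lt h
    rw [show r + s + 1 - r = s + 1 by omega, add_assoc r s 1, baileyKernel_add_left,
      show r + (s + 1) = r + 1 + s by omega, baileyKernel_add_left, qPoch_self_succ,
      show r + 1 + s + (r + 1) = r + 1 + s + r + 1 by omega, qPoch_succ]
    have hs := hq.one_sub_pow_ne_zero s
    have hrs := hA (r + 1 + s + r)
    rw [show r + 1 + s + r = r + s + 1 + r by omega] at *
    generalize 1 - q ^ (s + 1) = u, 1 - A * q * q ^ (r + s + 1 + r) = v at *
    field_simp

lemma baileyKernel_succ_succ (hy : QGeneric q (y * q)) (n r : ℕ) :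
    (1 - y * q) * (1 - y * q * q * q ^ (n + r)) * baileyKernel q y (n + 1) (r + 1)
      = baileyKernel q (y * q) n r := by
  rcases lt_or_ge n r with h | h
  · rw [baileyKernel_of_lt h, baileyKernel_of_lt (Nat.succ_lt_succ h), mul_zero]
  · rw [baileyKernel, baileyKernel, if_pos h, if_pos (Nat.succ_le_succ h), Nat.add_sub_add_right,
      show n + 1 + (r + 1) = n + r + 1 + 1 by omega, qPoch_succ', qPoch_succ]
    have h₁ := hy.one_sub_ne_zero
    have h₂ := hy.mul_q (n + r)
    generalize 1 - y * q = u, 1 - y * q * q * q ^ (n + r) = v at *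
    field_simp

/-- The factor `A^k q^{k²}` by which Bailey's lemma multiplies a Bailey pair relative to `A`. -/
noncomputable def baileyFactor (q A : ℂ) (k : ℕ) : ℂ := A ^ k * q ^ (k ^ 2)

/-- The Bailey transform `β_n = ∑_{r ≤ n} α_r / ((q;q)_{n-r} (Aq;q)_{n+r})`: the pair `(α, β)` is
a Bailey pair relative to `A`. -/
noncomputable def baileyTransform (q A : ℂ) (α : ℕ → ℂ) (n : ℕ) : ℂ :=
  ∑ r ∈ range (n + 1), α r * baileyKernel q A n r

lemma baileyTransform_eq_sum_range (q A : ℂ) (α : ℕ → ℂ) {n N : ℕ} (h : n ≤ N) :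
    baileyTransform q A α n = ∑ r ∈ range (N + 1), α r * baileyKernel q A n r :=
  sum_subset (range_subset_range.mpr (Nat.succ_le_succ h)) fun r _ hr => by
    rw [baileyKernel_of_lt (by simpa using hr), mul_zero]

lemma baileyFactor_mul_baileyKernel_add (hq : QGeneric q q) (hA : QGeneric q (A * q))
    (r j s : ℕ) :
    baileyFactor q A (r + j) / qPoch q q s * baileyKernel q A (r + j) r
      = baileyFactor q A r * baileyKernel q A (r + (j + s)) r *
        (qBinom q (j + s) j * ((A * q ^ (2 * r)) ^ j * q ^ (j ^ 2) *
          qPoch q (A * q ^ (2 * r) * q ^ (j + 1)) s)) := by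
  rw [baileyKernel_add_left, baileyKernel_add_left, qBinom_add_left,
    show r + (j + s) + r = r + j + r + s by omega, qPoch_add q (A * q) (r + j + r) s,
    show A * q ^ (2 * r) * q ^ (j + 1) = A * q * q ^ (r + j + r) by ring]
  have hs := hq.qPoch_ne_zero s
  have hj := hq.qPoch_ne_zero j
  have hjs := hq.qPoch_ne_zero (j + s)
  have hrj := hA.qPoch_ne_zero (r + j + r)
  have htail : qPoch q (A * q * q ^ (r + j + r)) s ≠ 0 := fun h =>
    hA.qPoch_ne_zero (r + j + r + s) (by rw [qPoch_add, h, mul_zero])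
  generalize qPoch q (A * q) (r + j + r) = u, qPoch q (A * q * q ^ (r + j + r)) s = v,
    qPoch q q (j + s) = w at *
  simp only [baileyFactor]
  field_simp
  ring

lemma sum_baileyFactor_mul_baileyKernel (hq : QGeneric q q) (hA : QGeneric q (A * q))
    {n r : ℕ} (hr : r ≤ n) :
    ∑ k ∈ range (n + 1), baileyFactor q A k / qPoch q q (n - k) * baileyKernel q A k r
      = baileyFactor q A r * baileyKernel q A n r := by
  obtain ⟨N, rfl⟩ := Nat.exists_eq_add_of_le hr
  have hlow : ∑ k ∈ range r, baileyFactor q A k / qPoch q q (r + N - k) * baileyKernel q A k r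
      = 0 := sum_eq_zero fun k hk => by
    rw [baileyKernel_of_lt (mem_range.mp hk), mul_zero]
  rw [add_assoc, sum_range_add, hlow, zero_add,
    ← mul_one (baileyFactor q A r * _), ← sum_qBinom_mul_qPoch_eq_one hq N (A * q ^ (2 * r)),
    mul_sum]
  refine sum_congr rfl fun j hj => ?_
  obtain ⟨s, rfl⟩ := Nat.exists_eq_add_of_le (mem_range_succ_iff.mp hj)
  rw [show r + (j + s) - (r + j) = s by omega, Nat.add_sub_cancel_left]
  exact baileyFactor_mul_baileyKernel_add hq hA r j s

/-- The case `ρ₁, ρ₂ → ∞` of Bailey's lemma. -/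
theorem sum_baileyFactor_mul_baileyTransform (hq : QGeneric q q) (hA : QGeneric q (A * q))
    (α : ℕ → ℂ) (n : ℕ) :
    ∑ k ∈ range (n + 1), baileyFactor q A k / qPoch q q (n - k) * baileyTransform q A α k
      = baileyTransform q A (fun r => α r * baileyFactor q A r) n := by
  have hexpand : ∀ k ∈ range (n + 1),
      baileyFactor q A k / qPoch q q (n - k) * baileyTransform q A α k
        = ∑ r ∈ range (n + 1),
          α r * (baileyFactor q A k / qPoch q q (n - k) * baileyKernel q A k r) := by
    intro k hk
    rw [baileyTransform_eq_sum_range q A α (mem_range_succ_iff.mp hk), mul_sum]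
    exact sum_congr rfl fun r _ => mul_left_comm _ _ _
  rw [sum_congr rfl hexpand, sum_comm]
  refine sum_congr rfl fun r hr => ?_
  rw [← mul_sum, sum_baileyFactor_mul_baileyKernel hq hA (mem_range_succ_iff.mp hr), mul_assoc]

theorem tsum_baileyFactor_mul_qBinom (hq : QGeneric q q) (hA : QGeneric q (A * q))
    (α : ℕ → ℂ) (n : ℕ) :
    ∑' k, baileyFactor q A k * qBinom q n k * (qPoch q q k * baileyTransform q A α k)
      = qPoch q q n * baileyTransform q A (fun r => α r * baileyFactor q A r) n := by
  rw [tsum_eq_sum (s := range (n + 1)), ← sum_baileyFactor_mul_baileyTransform hq hA, mul_sum]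
  · refine sum_congr rfl fun k hk => ?_
    obtain ⟨s, rfl⟩ := Nat.exists_eq_add_of_le (mem_range_succ_iff.mp hk)
    rw [qBinom_add_left, Nat.add_sub_cancel_left]
    have hk := hq.qPoch_ne_zero k
    field_simp
  · intro k hk
    rw [qBinom_of_lt (by simpa using hk), mul_zero, zero_mul]

/-- The `α`-sequence of the unit Bailey pair relative to `y`, the one whose `β`-sequence is
`1, 0, 0, …`. -/
noncomputable def unitAlpha (q y : ℂ) (r : ℕ) : ℂ :=
  (-1) ^ r * q ^ r.choose 2 * (qPoch q y r * (1 - y * q ^ (2 * r)) / ((1 - y) * qPoch q q r))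

/-- The coefficients `(-1)^r q^{r(r+1)/2} (yq;q)_r / ((1-yq) (q;q)_r)` that turn differences of a
sequence into the `α`-sequence of a Bailey pair relative to `yq`. -/
noncomputable def shiftCoeff (q y : ℂ) (r : ℕ) : ℂ :=
  (-1) ^ r * q ^ (r + 1).choose 2 * (qPoch q (y * q) r / ((1 - y * q) * qPoch q q r))

lemma succ_choose_two (r : ℕ) : (r + 1).choose 2 = r.choose 2 + r := by
  rw [Nat.choose_succ_succ', Nat.choose_one_right, add_comm]

lemma unitAlpha_zero (hy : QGeneric q y) : unitAlpha q y 0 = 1 := by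
  simp [unitAlpha, qPoch_zero, hy.one_sub_ne_zero]

lemma shiftCoeff_zero (q y : ℂ) : shiftCoeff q y 0 = 1 / (1 - y * q) := by
  simp [shiftCoeff, qPoch_zero]

lemma shiftCoeff_succ (hq : QGeneric q q) (y : ℂ) (r : ℕ) :
    (1 - q ^ (r + 1)) * shiftCoeff q y (r + 1)
      = -(q ^ (r + 1) * (1 - y * q * q ^ r)) * shiftCoeff q y r := by
  have hr := hq.one_sub_pow_ne_zero r
  rw [shiftCoeff, shiftCoeff, succ_choose_two (r + 1), qPoch_succ, qPoch_self_succ]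
  generalize 1 - y * q = u, 1 - y * q * q ^ r = v
  field_simp
  ring

lemma unitAlpha_succ (hq : QGeneric q q) (hy : QGeneric q y) (r : ℕ) :
    (1 - q ^ (r + 1)) * unitAlpha q y (r + 1)
      = -((1 - y * q) * (1 - y * q ^ (2 * (r + 1)))) * shiftCoeff q y r := by
  have hr := hq.one_sub_pow_ne_zero r
  have hy₀ := hy.one_sub_ne_zero
  have hy₁ := hy.mul_q.one_sub_ne_zero
  rw [shiftCoeff, unitAlpha, qPoch_succ', qPoch_self_succ]
  generalize 1 - y = u, 1 - y * q = v, 1 - y * q ^ (2 * (r + 1)) = w at *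
  field_simp
  ring

lemma unitAlpha_mul_baileyKernel_zero (hq : QGeneric q q) (hy : QGeneric q y) (n : ℕ) :
    (1 - q ^ (n + 1)) * (unitAlpha q y 0 * baileyKernel q y (n + 1) 0)
      = shiftCoeff q y 0 * baileyKernel q (y * q) n 0 := by
  have hn := hq.one_sub_pow_ne_zero n
  rw [unitAlpha_zero hy, shiftCoeff_zero, baileyKernel, if_pos (Nat.zero_le _), baileyKernel,
    if_pos (Nat.zero_le _)]
  simp only [Nat.sub_zero, add_zero]
  rw [qPoch_succ' q (y * q), qPoch_self_succ]
  generalize 1 - q ^ (n + 1) = u at *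
  field_simp

lemma unitAlpha_mul_baileyKernel_succ (hq : QGeneric q q) (hy : QGeneric q y) (n r : ℕ) :
    (1 - q ^ (n + 1)) * (unitAlpha q y (r + 1) * baileyKernel q y (n + 1) (r + 1))
      = shiftCoeff q y (r + 1) * baileyKernel q (y * q) n (r + 1)
        - shiftCoeff q y r * baileyKernel q (y * q) n r := by
  rcases lt_or_ge n r with h | h
  · simp [baileyKernel_of_lt, h, h.trans (Nat.lt_succ_self r)]
  · obtain ⟨s, rfl⟩ := Nat.exists_eq_add_of_le h
    have hk₁ := baileyKernel_succ_succ hy.mul_q (r + s) r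
    have hk₂ := baileyKernel_succ_right hq hy.mul_q.mul_q (r + s) r
    have hα := unitAlpha_succ hq hy r
    have hC := shiftCoeff_succ hq y r
    have hr := hq.one_sub_pow_ne_zero r
    have hD := hy.mul_q.mul_q (r + s + r)
    rw [Nat.add_sub_cancel_left] at hk₂
    refine mul_left_cancel₀ (mul_ne_zero hr hD) ?_
    linear_combination
      (1 - q ^ (r + s + 1)) * (1 - y * q * q * q ^ (r + s + r)) *
          baileyKernel q y (r + s + 1) (r + 1) * hα
        - (1 - q ^ (r + s + 1)) * (1 - y * q ^ (2 * (r + 1))) * shiftCoeff q y r * hk₁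
        - (1 - y * q * q * q ^ (r + s + r)) * baileyKernel q (y * q) (r + s) (r + 1) * hC
        + q ^ (r + 1) * (1 - y * q * q ^ r) * shiftCoeff q y r * hk₂

theorem baileyTransform_unitAlpha_mul (hq : QGeneric q q) (hy : QGeneric q y) (β : ℕ → ℂ)
    (n : ℕ) :
    (1 - q ^ (n + 1)) * baileyTransform q y (fun r => unitAlpha q y r * β r) (n + 1)
      = baileyTransform q (y * q) (fun r => shiftCoeff q y r * (β r - β (r + 1))) n := by
  let C r := shiftCoeff q y r * baileyKernel q (y * q) n r
  have hC : C (n + 1) = 0 := by simp only [C, baileyKernel_of_lt n.lt_succ_self, mul_zero]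
  have hterm (r : ℕ) : (1 - q ^ (n + 1)) *
      (unitAlpha q y (r + 1) * β (r + 1) * baileyKernel q y (n + 1) (r + 1))
        = β (r + 1) * C (r + 1) - β (r + 1) * C r := by
    linear_combination β (r + 1) * unitAlpha_mul_baileyKernel_succ hq hy n r
  calc _ = ∑ r ∈ range (n + 1), (β (r + 1) * C (r + 1) - β (r + 1) * C r) + β 0 * C 0 := by
        rw [baileyTransform, mul_sum, sum_range_succ', sum_congr rfl fun r _ => hterm r]
        congr 1
        linear_combination β 0 * unitAlpha_mul_baileyKernel_zero hq hy n
    _ = ∑ r ∈ range (n + 1), (β r * C r - β (r + 1) * C r) := by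
        rw [sum_sub_distrib, sum_sub_distrib, sub_add_eq_add_sub,
          ← sum_range_succ' fun r => β r * C r, sum_range_succ, hC, mul_zero, add_zero]
    _ = _ := sum_congr rfl fun r _ => by ring

theorem baileyTransform_unitAlpha (hq : QGeneric q q) (hy : QGeneric q y) (n : ℕ) :
    baileyTransform q y (unitAlpha q y) n = if n = 0 then 1 else 0 := by
  rcases n with _ | n
  · simp [baileyTransform, unitAlpha_zero hy, baileyKernel, qPoch_zero]
  · -- The differences of the constant sequence `1` vanish.
    have := baileyTransform_unitAlpha_mul hq hy (fun _ => 1) n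
    simpa [baileyTransform, hq.one_sub_pow_ne_zero n] using this

theorem qPoch_mul_baileyTransform_unitAlpha_mul_baileyFactor (hq : QGeneric q q)
    (hy : QGeneric q y) (n : ℕ) :
    qPoch q q n * baileyTransform q y (fun r => unitAlpha q y r * baileyFactor q y r) n = 1 := by
  rw [← tsum_baileyFactor_mul_qBinom hq hy.mul_q, tsum_eq_single 0]
  · simp [baileyTransform_unitAlpha hq hy, baileyFactor, qPoch_zero, qBinom_zero_right hq]
  · intro k hk
    rw [baileyTransform_unitAlpha hq hy, if_neg hk, mul_zero, mul_zero]

end BaileyPairs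

section ConjugateBaileyPair

open Finset Filter Topology

variable {q x A : ℂ}

lemma summable_mul_pow_of_norm_lt_one (hq : ‖q‖ < 1) (x : ℂ) :
    Summable fun n : ℕ => ‖-(x * q ^ n)‖ := by
  simpa only [norm_neg, norm_mul, norm_pow] using
    (summable_geometric_of_lt_one (norm_nonneg q) hq).mul_left ‖x‖

lemma tendsto_qPoch (hq : ‖q‖ < 1) (x : ℂ) :
    Tendsto (qPoch q x) atTop (𝓝 (∏' i : ℕ, (1 - x * q ^ i))) := by
  change Tendsto (fun n => ∏ i ∈ range n, (1 - x * q ^ i)) _ _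
  simpa only [sub_eq_add_neg] using
    (multipliable_one_add_of_summable (summable_mul_pow_of_norm_lt_one hq x)).tendsto_prod_tprod_nat

lemma QGeneric.tprod_ne_zero (hx : QGeneric q x) (hq : ‖q‖ < 1) :
    ∏' i : ℕ, (1 - x * q ^ i) ≠ 0 := by
  simpa only [sub_eq_add_neg] using tprod_one_add_ne_zero_of_summable
    (fun i => by simpa only [sub_eq_add_neg] using hx i) (summable_mul_pow_of_norm_lt_one hq x)

lemma exists_norm_le_of_tendsto {E : Type*} [NormedAddCommGroup E] {f : ℕ → E} {l : E}
    (hf : Tendsto f atTop (𝓝 l)) :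
    ∃ C, ∀ n, ‖f n‖ ≤ C :=
  Asymptotics.isBigO_one_nat_atTop_iff.mp (hf.isBigO_one ℝ)

lemma exists_norm_qPoch_le (hq : ‖q‖ < 1) (x : ℂ) : ∃ C, ∀ n, ‖qPoch q x n‖ ≤ C :=
  exists_norm_le_of_tendsto (tendsto_qPoch hq x)

lemma QGeneric.exists_norm_inv_qPoch_le (hx : QGeneric q x) (hq : ‖q‖ < 1) :
    ∃ C, ∀ n, ‖(qPoch q x n)⁻¹‖ ≤ C :=
  exists_norm_le_of_tendsto ((tendsto_qPoch hq x).inv₀ (hx.tprod_ne_zero hq))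

lemma exists_norm_qBinom_le (hq : ‖q‖ < 1) : ∃ C, ∀ n k, ‖qBinom q n k‖ ≤ C := by
  obtain ⟨C, hC⟩ := exists_norm_qPoch_le hq q
  obtain ⟨D, hD⟩ := (QGeneric.of_norm_lt_one hq.le hq).exists_norm_inv_qPoch_le hq
  have hC₀ : 0 ≤ C := (norm_nonneg _).trans (hC 0)
  have hD₀ : 0 ≤ D := (norm_nonneg _).trans (hD 0)
  refine ⟨C * (D * D), fun n k => ?_⟩
  unfold qBinom
  split_ifs
  · rw [div_eq_mul_inv, mul_inv, norm_mul, norm_mul]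
    gcongr
    exacts [hC _, hD _, hD _]
  · rw [norm_zero]
    positivity

lemma exists_norm_baileyKernel_le (hq : ‖q‖ < 1) (hA : QGeneric q (A * q)) :
    ∃ C, ∀ n r, ‖baileyKernel q A n r‖ ≤ C := by
  obtain ⟨C, hC⟩ := (QGeneric.of_norm_lt_one hq.le hq).exists_norm_inv_qPoch_le hq
  obtain ⟨D, hD⟩ := hA.exists_norm_inv_qPoch_le hq
  have hC₀ : 0 ≤ C := (norm_nonneg _).trans (hC 0)
  have hD₀ : 0 ≤ D := (norm_nonneg _).trans (hD 0)
  refine ⟨C * D, fun n r => ?_⟩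
  unfold baileyKernel
  split_ifs
  · rw [one_div, mul_inv, norm_mul]
    gcongr
    exacts [hC _, hD _]
  · rw [norm_zero]
    positivity

lemma exists_norm_shiftCoeff_le (hq : ‖q‖ < 1) (y : ℂ) : ∃ C, ∀ r, ‖shiftCoeff q y r‖ ≤ C := by
  obtain ⟨C, hC⟩ := exists_norm_qPoch_le hq (y * q)
  obtain ⟨D, hD⟩ := (QGeneric.of_norm_lt_one hq.le hq).exists_norm_inv_qPoch_le hq
  have hC₀ : 0 ≤ C := (norm_nonneg _).trans (hC 0)
  refine ⟨C * (‖1 - y * q‖⁻¹ * D), fun r => ?_⟩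
  have hle : ‖(-1 : ℂ) ^ r * q ^ (r + 1).choose 2‖ ≤ 1 := by
    simpa using pow_le_one₀ (norm_nonneg q) hq.le
  rw [shiftCoeff, div_eq_mul_inv, mul_inv, ← norm_inv, ← one_mul (C * _), norm_mul,
    norm_mul (qPoch q (y * q) r), norm_mul (1 - y * q)⁻¹]
  gcongr
  exacts [hC _, hD _]

theorem tsum_mul_baileyTransform (hq : ‖q‖ < 1) (hA : QGeneric q (A * q)) {δ α : ℕ → ℂ}
    (hδ : Summable (‖δ ·‖)) (hα : Summable (‖α ·‖)) :
    ∑' n, δ n * baileyTransform q A α n = ∑' r, α r * ∑' n, δ n * baileyKernel q A n r := by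
  obtain ⟨C, hC⟩ := exists_norm_baileyKernel_le hq hA
  have hsum : Summable (Function.uncurry fun r n => α r * (δ n * baileyKernel q A n r)) := by
    refine .of_norm_bounded ((hα.mul_of_nonneg hδ (fun _ => norm_nonneg _)
      fun _ => norm_nonneg _).mul_right C) fun ⟨r, n⟩ => ?_
    rw [Function.uncurry_apply_pair, norm_mul, norm_mul, ← mul_assoc]
    gcongr
    exact hC n r
  calc _ = ∑' n, ∑' r, α r * (δ n * baileyKernel q A n r) := tsum_congr fun n => by
        rw [tsum_eq_sum (s := range (n + 1)), baileyTransform, mul_sum]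
        · exact sum_congr rfl fun r _ => mul_left_comm _ _ _
        · intro r hr
          rw [baileyKernel_of_lt (by simpa using hr), mul_zero, mul_zero]
    _ = ∑' r, α r * ∑' n, δ n * baileyKernel q A n r := by
        rw [hsum.tsum_comm]
        simp only [tsum_mul_left]

lemma tsum_eq_sub_of_telescoping {G : Type*} [AddCommGroup G] [TopologicalSpace G]
    [ContinuousSub G] [T2Space G] {f F : ℕ → G} {L : G} (hf : Summable f)
    (h : ∀ n, f n = F (n + 1) - F n) (hF : Tendsto F atTop (𝓝 L)) : ∑' n, f n = L - F 0 :=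
  tendsto_nhds_unique hf.hasSum.tendsto_sum_nat <| by
    simpa only [h, sum_range_sub] using hF.sub_const (F 0)

/-- The sequence `δ_n = (x;q)_{n+1} (q;q)_n xⁿ` of a conjugate Bailey pair relative to `x²q`. -/
noncomputable def conjugateDelta (q x : ℂ) (n : ℕ) : ℂ := qPoch q x (n + 1) * x ^ n * qPoch q q n

/-- The terms of the series `γ_r = ∑_n δ_n / ((q;q)_{n-r} (x²q²;q)_{n+r})` conjugate to
`conjugateDelta`. -/
noncomputable def conjugateTerm (q x : ℂ) (r n : ℕ) : ℂ :=
  conjugateDelta q x n * baileyKernel q (x ^ 2 * q) n r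

lemma summable_norm_qPoch_mul_pow (hq : ‖q‖ < 1) (hx : ‖x‖ < 1) :
    Summable fun n => ‖qPoch q x (n + 1) * x ^ n‖ := by
  obtain ⟨C, hC⟩ := exists_norm_qPoch_le hq x
  refine .of_nonneg_of_le (fun _ => norm_nonneg _) (fun n => ?_)
    ((summable_geometric_of_lt_one (norm_nonneg x) hx).mul_left C)
  rw [norm_mul, norm_pow]
  gcongr
  exact hC _

lemma summable_norm_conjugateDelta (hq : ‖q‖ < 1) (hx : ‖x‖ < 1) :
    Summable (‖conjugateDelta q x ·‖) := by
  obtain ⟨C, hC⟩ := exists_norm_qPoch_le hq q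
  refine .of_nonneg_of_le (fun _ => norm_nonneg _) (fun n => ?_)
    ((summable_norm_qPoch_mul_pow hq hx).mul_right C)
  rw [conjugateDelta, norm_mul]
  gcongr
  exact hC n

lemma summable_conjugateTerm (hq : ‖q‖ < 1) (hx : ‖x‖ < 1) (hA : QGeneric q (x ^ 2 * q * q))
    (r : ℕ) : Summable (conjugateTerm q x r) := by
  obtain ⟨C, hC⟩ := exists_norm_baileyKernel_le hq hA
  refine .of_norm_bounded ((summable_norm_conjugateDelta hq hx).mul_right C) fun n => ?_
  rw [conjugateTerm, norm_mul]
  gcongr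
  exact hC n r

lemma conjugateDelta_succ (q x : ℂ) (n : ℕ) :
    conjugateDelta q x (n + 1)
      = (1 - x * q ^ (n + 1)) * x * (1 - q ^ (n + 1)) * conjugateDelta q x n := by
  rw [conjugateDelta, qPoch_succ, qPoch_self_succ, conjugateDelta]
  ring

-- The recurrence in `r` and the multiplier of the certificate come from the `q`-Zeilberger
-- algorithm.
lemma conjugateTerm_succ (hq : QGeneric q q) (hA : QGeneric q (x ^ 2 * q * q)) (r n : ℕ) :
    (1 - x ^ 2 * q * q ^ r) * conjugateTerm q x (r + 1) n
        - x * (1 - q ^ (r + 1)) * conjugateTerm q x r n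
      = -(1 + x * q ^ (r + 1)) * (1 - q ^ (n + 1 - r)) * conjugateTerm q x r (n + 1)
        - -(1 + x * q ^ (r + 1)) * (1 - q ^ (n - r)) * conjugateTerm q x r n := by
  have hleft := baileyKernel_succ_left hq hA n r
  have hright : baileyKernel q (x ^ 2 * q) n (r + 1)
      = (1 - q ^ (n - r)) * (1 - q ^ (n + 1 - r)) * baileyKernel q (x ^ 2 * q) (n + 1) r :=
    mul_left_cancel₀ (hA (n + r)) <| by
      rw [baileyKernel_succ_right hq hA, ← hleft]
      ring
  simp only [conjugateTerm, conjugateDelta_succ]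
  rw [hright, ← hleft]
  rcases lt_or_ge n r with h | h
  · simp [Nat.sub_eq_zero_of_le (Nat.succ_le_of_lt h)]
  · obtain ⟨s, rfl⟩ := Nat.exists_eq_add_of_le h
    rw [Nat.add_sub_cancel_left]
    ring

theorem tsum_conjugateTerm_succ (hq : ‖q‖ < 1) (hx : ‖x‖ < 1) (hA : QGeneric q (x ^ 2 * q * q))
    (r : ℕ) :
    (1 - x ^ 2 * q * q ^ r) * ∑' n, conjugateTerm q x (r + 1) n
      = x * (1 - q ^ (r + 1)) * ∑' n, conjugateTerm q x r n := by
  have hs := summable_conjugateTerm hq hx hA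
  have hlim : Tendsto (fun n => -(1 + x * q ^ (r + 1)) * (1 - q ^ (n - r)) * conjugateTerm q x r n)
      atTop (𝓝 0) := by
    have hpow := (tendsto_pow_atTop_nhds_zero_of_norm_lt_one hq).comp (tendsto_sub_atTop_nat r)
    simpa using ((hpow.const_sub 1).const_mul (-(1 + x * q ^ (r + 1)))).mul
      (hs r).tendsto_atTop_zero
  have htele := tsum_eq_sub_of_telescoping (((hs (r + 1)).mul_left _).sub ((hs r).mul_left _))
    (conjugateTerm_succ (QGeneric.of_norm_lt_one hq.le hq) hA r) hlim
  rw [((hs (r + 1)).mul_left _).tsum_sub ((hs r).mul_left _), tsum_mul_left, tsum_mul_left] at htele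
  simpa [sub_eq_zero] using htele

lemma conjugateTerm_zero (hq : QGeneric q q) (hA : QGeneric q (x ^ 2 * q)) (n : ℕ) :
    conjugateTerm q x 0 n
      = -(1 - x ^ 2 * q) * x ^ (n + 1) * qPoch q (x * q) (n + 1) / qPoch q (x ^ 2 * q) (n + 1)
        - -(1 - x ^ 2 * q) * x ^ n * qPoch q (x * q) n / qPoch q (x ^ 2 * q) n := by
  have hqn := hq.qPoch_ne_zero n
  have hAn := hA.qPoch_ne_zero n
  have h₀ := hA.one_sub_ne_zero
  have hn := hA n
  have hsucc : qPoch q (x ^ 2 * q * q) n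
      = qPoch q (x ^ 2 * q) n * (1 - x ^ 2 * q * q ^ n) / (1 - x ^ 2 * q) := by
    rw [← qPoch_succ, qPoch_succ', mul_div_cancel_left₀ _ h₀]
  rw [conjugateTerm, conjugateDelta, baileyKernel, if_pos (Nat.zero_le _), Nat.sub_zero, add_zero,
    hsucc, qPoch_succ', qPoch_succ q (x * q), qPoch_succ q (x ^ 2 * q)]
  generalize 1 - x ^ 2 * q = u at *
  generalize hv : 1 - x ^ 2 * q * q ^ n = v at *
  field_simp
  rw [← hv]
  ring

theorem tsum_conjugateTerm_zero (hq : ‖q‖ < 1) (hx : ‖x‖ < 1) (hA : QGeneric q (x ^ 2 * q)) :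
    ∑' n, conjugateTerm q x 0 n = 1 - x ^ 2 * q := by
  have hlim : Tendsto
      (fun n => -(1 - x ^ 2 * q) * x ^ n * qPoch q (x * q) n / qPoch q (x ^ 2 * q) n)
      atTop (𝓝 0) := by
    simpa only [mul_zero, zero_mul, zero_div, Pi.div_def] using
      (((tendsto_pow_atTop_nhds_zero_of_norm_lt_one hx).const_mul (-(1 - x ^ 2 * q))).mul
      (tendsto_qPoch hq (x * q))).div (tendsto_qPoch hq (x ^ 2 * q)) (hA.tprod_ne_zero hq)
  rw [tsum_eq_sub_of_telescoping (summable_conjugateTerm hq hx hA.mul_q 0)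
    (conjugateTerm_zero (QGeneric.of_norm_lt_one hq.le hq) hA) hlim]
  simp [qPoch_zero]

theorem shiftCoeff_mul_tsum_conjugateTerm (hq : ‖q‖ < 1) (hx : ‖x‖ < 1)
    (hA : QGeneric q (x ^ 2 * q)) (r : ℕ) :
    shiftCoeff q (x ^ 2) r * ∑' n, conjugateTerm q x r n
      = (-1) ^ r * x ^ r * q ^ (r + 1).choose 2 := by
  have hgen := QGeneric.of_norm_lt_one hq.le hq
  induction r with
  | zero => simp [shiftCoeff_zero, tsum_conjugateTerm_zero hq hx hA, hA.one_sub_ne_zero]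
  | succ r ih =>
    refine mul_left_cancel₀ (mul_ne_zero (hgen.one_sub_pow_ne_zero r) (hA r)) ?_
    rw [succ_choose_two (r + 1)]
    linear_combination
      (1 - x ^ 2 * q * q ^ r) * (∑' n, conjugateTerm q x (r + 1) n) * shiftCoeff_succ hgen (x ^ 2) r
        - q ^ (r + 1) * (1 - x ^ 2 * q * q ^ r) * shiftCoeff q (x ^ 2) r *
          tsum_conjugateTerm_succ hq hx hA.mul_q r
        - q ^ (r + 1) * (1 - x ^ 2 * q * q ^ r) * x * (1 - q ^ (r + 1)) * ih

end ConjugateBaileyPair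

section IteratedSums

open Finset

variable {𝕜 κ : Type*} [NormedField 𝕜]

lemma summable_prod_fin {n : ℕ} {g : Fin n → κ → ℝ} (hg₀ : ∀ i, 0 ≤ g i)
    (hg : ∀ i, Summable (g i)) : Summable fun k : Fin n → κ => ∏ i, g i (k i) := by
  induction n with
  | zero => exact .of_finite
  | succ n ih =>
    rw [← (Fin.consEquiv fun _ => κ).summable_iff]
    refine ((hg 0).mul_of_nonneg (ih (fun i => hg₀ i.succ) fun i => hg i.succ) (hg₀ 0)
      fun k => prod_nonneg fun i _ => hg₀ i.succ (k i)).congr fun p => ?_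
    simp [Fin.consEquiv, Fin.prod_univ_succ]

/-- The summand `f(k_j) ∏_{i < j} w_i(k_i, k_{i+1})` of a multiple series whose variables
`k₀, …, k_j` are coupled along a chain. -/
def chainProd (w : ℕ → κ → κ → 𝕜) (f : κ → 𝕜) (j : ℕ) (k : Fin (j + 1) → κ) : 𝕜 :=
  f (k (Fin.last j)) * ∏ i : Fin j, w i (k i.castSucc) (k i.succ)

/-- The sum of `∏_{i < j} w_i(k_i, k_{i+1})` over `k₀, …, k_{j-1}`, as a function of `k_j = n`,
computed as an iterated sum. -/
noncomputable def nestedSum (w : ℕ → κ → κ → 𝕜) : ℕ → κ → 𝕜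
  | 0, _ => 1
  | j + 1, n => ∑' k, w j k n * nestedSum w j k

lemma chainProd_snoc (w : ℕ → κ → κ → 𝕜) (f : κ → 𝕜) (j : ℕ) (n : κ) (k : Fin (j + 1) → κ) :
    chainProd w f (j + 1) (Fin.snoc (α := fun _ => κ) k n)
      = f n * chainProd w (fun l => w j l n) j k := by
  have hsucc (i : Fin j) : Fin.snoc (α := fun _ => κ) k n i.castSucc.succ = k i.succ := by
    rw [Fin.succ_castSucc, Fin.snoc_castSucc]
  simp only [chainProd, Fin.prod_univ_castSucc, Fin.succ_last, Fin.snoc_last, Fin.snoc_castSucc,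
    Fin.val_castSucc, Fin.val_last, hsucc]
  ring

variable [CompleteSpace 𝕜] {w : ℕ → κ → κ → 𝕜} {f : κ → 𝕜} {g : κ → ℝ}

theorem summable_chainProd (hf : Summable (‖f ·‖)) (hg : Summable g)
    (hw : ∀ i k n, ‖w i k n‖ ≤ g k) (j : ℕ) : Summable (chainProd w f j) := by
  have hg₀ : 0 ≤ g := fun k => (norm_nonneg _).trans (hw 0 k k)
  let G : Fin (j + 1) → κ → ℝ := Fin.snoc (fun _ => g) (‖f ·‖)
  have hG₀ : ∀ i, 0 ≤ G i := Fin.lastCases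
    (by simp only [G, Fin.snoc_last]; exact fun k => norm_nonneg (f k))
    fun i => by simpa only [G, Fin.snoc_castSucc] using hg₀
  have hG : ∀ i, Summable (G i) := Fin.lastCases
    (by simpa only [G, Fin.snoc_last] using hf)
    fun i => by simpa only [G, Fin.snoc_castSucc] using hg
  refine .of_norm_bounded (summable_prod_fin hG₀ hG) fun k => ?_
  rw [chainProd, norm_mul, norm_prod, Fin.prod_univ_castSucc, mul_comm]
  simp only [G, Fin.snoc_castSucc, Fin.snoc_last]
  gcongr
  apply hw

theorem tsum_chainProd (hf : Summable (‖f ·‖)) (hg : Summable g)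
    (hw : ∀ i k n, ‖w i k n‖ ≤ g k) (j : ℕ) :
    ∑' k, chainProd w f j k = ∑' n, f n * nestedSum w j n := by
  induction j generalizing f with
  | zero =>
    rw [← (Equiv.funUnique (Fin 1) κ).tsum_eq]
    simp [chainProd, nestedSum]
  | succ j ih =>
    let e : κ × (Fin (j + 1) → κ) ≃ (Fin (j + 2) → κ) := Fin.snocEquiv fun _ => κ
    have hsum : Summable fun p => chainProd w f (j + 1) (e p) :=
      (e.summable_iff (f := chainProd w f (j + 1))).mpr (summable_chainProd hf hg hw (j + 1))
    have hwn (n : κ) : Summable fun k => ‖w j k n‖ :=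
      .of_nonneg_of_le (fun _ => norm_nonneg _) (fun k => hw j k n) hg
    rw [← e.tsum_eq, hsum.tsum_prod]
    refine tsum_congr fun n => ?_
    simp only [e, Fin.snocEquiv, Equiv.coe_fn_mk, chainProd_snoc, tsum_mul_left]
    rw [ih (hwn n), nestedSum]

end IteratedSums

section MultipleSeries

open Finset

variable {q x y : ℂ} {a : ℕ}

/-- The coupling of `k_i = k` and `k_{i+1} = n` in the summand of `H_m^{(a)}(x)`, where `y = x²`. -/
noncomputable def chainWeight (q y : ℂ) (a i k n : ℕ) : ℂ :=
  if i < a then baileyFactor q y k * qBinom q n k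
  else if i = a then baileyFactor q y k * qBinom q (n + 1) k
  else baileyFactor q (y * q) k * qBinom q n k

lemma chainWeight_of_lt {i : ℕ} (h : i < a) (q y : ℂ) (k n : ℕ) :
    chainWeight q y a i k n = baileyFactor q y k * qBinom q n k := if_pos h

lemma chainWeight_self (q y : ℂ) (a k n : ℕ) :
    chainWeight q y a a k n = baileyFactor q y k * qBinom q (n + 1) k := by
  rw [chainWeight, if_neg a.lt_irrefl, if_pos rfl]

lemma chainWeight_of_gt {i : ℕ} (h : a < i) (q y : ℂ) (k n : ℕ) :
    chainWeight q y a i k n = baileyFactor q (y * q) k * qBinom q n k := by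
  rw [chainWeight, if_neg h.not_gt, if_neg h.ne']

lemma chainWeight_zero_zero (hq : QGeneric q q) (y : ℂ) (a n : ℕ) :
    chainWeight q y a 0 0 n = 1 := by
  simp [chainWeight, baileyFactor, qBinom_zero_right hq]

lemma norm_baileyFactor_le (hq : ‖q‖ ≤ 1) (A : ℂ) (k : ℕ) : ‖baileyFactor q A k‖ ≤ ‖A‖ ^ k := by
  rw [baileyFactor, norm_mul, norm_pow, norm_pow]
  exact mul_le_of_le_one_right (by positivity) (pow_le_one₀ (norm_nonneg q) hq)

lemma exists_norm_chainWeight_le (hq : ‖q‖ < 1) (y : ℂ) (a : ℕ) :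
    ∃ C, ∀ i k n, ‖chainWeight q y a i k n‖ ≤ ‖y‖ ^ k * C := by
  obtain ⟨C, hC⟩ := exists_norm_qBinom_le hq
  have hfactor (k : ℕ) : ‖baileyFactor q (y * q) k‖ ≤ ‖y‖ ^ k := by
    refine (norm_baileyFactor_le hq.le _ k).trans ?_
    rw [norm_mul]
    gcongr
    exact mul_le_of_le_one_right (norm_nonneg y) hq.le
  refine ⟨C, fun i k n => ?_⟩
  unfold chainWeight
  split_ifs
  all_goals
    rw [norm_mul]
    gcongr
    exacts [by first | exact hfactor k | exact norm_baileyFactor_le hq.le y k, hC _ _]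

lemma Kfun_zero (m : ℕ) (k : Fin m → ℕ) : Kfun m k 0 = 0 := dif_neg (by omega)

lemma Kfun_succ {m : ℕ} (k : Fin m → ℕ) (i : Fin m) : Kfun m k (i + 1) = k i := by
  rw [Kfun, dif_pos (by omega)]
  rfl

lemma prod_chainWeight (hq : QGeneric q q) (x : ℂ) {m : ℕ} (ha : a < m) {K : ℕ → ℕ}
    (hK : K 0 = 0) :
    ∏ i ∈ range m, chainWeight q (x ^ 2) a i (K i) (K (i + 1))
      = (∏ i ∈ Ico 1 a, q ^ (K i ^ 2) * x ^ (2 * K i) * qBinom q (K (i + 1)) (K i)) *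
        (q ^ (K a ^ 2) * x ^ (2 * K a) * qBinom q (K (a + 1) + 1) (K a)) *
        ∏ i ∈ Ico (a + 1) m,
          q ^ (K i ^ 2 + K i) * x ^ (2 * K i) * qBinom q (K (i + 1)) (K i) := by
  have hlow : ∏ i ∈ range a, chainWeight q (x ^ 2) a i (K i) (K (i + 1))
      = ∏ i ∈ Ico 1 a, chainWeight q (x ^ 2) a i (K i) (K (i + 1)) := by
    have hsub : Ico 1 a ⊆ range a := fun i hi => mem_range.mpr (mem_Ico.mp hi).2
    refine (prod_subset hsub fun i hi hi' => ?_).symm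
    obtain rfl : i = 0 := by simp at hi hi'; omega
    rw [hK, chainWeight_zero_zero hq]
  rw [← prod_range_mul_prod_Ico _ ha.le, prod_eq_prod_Ico_succ_bot ha, hlow, chainWeight_self,
    ← mul_assoc]
  refine congrArg₂ (· * ·) (congrArg₂ (· * ·) (prod_congr rfl fun i hi => ?_) ?_)
    (prod_congr rfl fun i hi => ?_)
  · rw [chainWeight_of_lt (mem_Ico.mp hi).2, baileyFactor, pow_mul x]
    ring
  · rw [baileyFactor, pow_mul x]
    ring
  · rw [chainWeight_of_gt (mem_Ico.mp hi).1, baileyFactor, pow_mul x]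
    ring

theorem Hterm_eq_chainProd (hq : QGeneric q q) (x : ℂ) {j : ℕ} (ha : a ≤ j) :
    Hterm q x (j + 1) a
      = chainProd (fun i => chainWeight q (x ^ 2) a (i + 1))
          (fun n => qPoch q x (n + 1) * x ^ n) j := by
  funext k
  have hweights : ∏ i : Fin j, chainWeight q (x ^ 2) a (i + 1) (k i.castSucc) (k i.succ)
      = ∏ i ∈ range (j + 1),
          chainWeight q (x ^ 2) a i (Kfun (j + 1) k i) (Kfun (j + 1) k (i + 1)) := by
    rw [prod_range_succ', Kfun_zero, chainWeight_zero_zero hq, mul_one, prod_range]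
    refine prod_congr rfl fun i _ => ?_
    rw [← Kfun_succ k i.castSucc, ← Kfun_succ k i.succ, Fin.val_castSucc, Fin.val_succ]
  rw [chainProd, hweights, prod_chainWeight hq x (Nat.lt_succ_of_le ha) (Kfun_zero _ k),
    ← Kfun_succ k (Fin.last j), Fin.val_last, Hterm]
  simp only [mul_assoc]

lemma summable_norm_sq_pow_mul {C : ℝ} (hx : ‖x‖ < 1) : Summable fun k => ‖x ^ 2‖ ^ k * C :=
  (summable_geometric_of_lt_one (norm_nonneg _)
    (by simpa using pow_lt_one₀ (norm_nonneg x) hx two_ne_zero)).mul_right C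

theorem summable_Hterm (hq : ‖q‖ < 1) (hx : ‖x‖ < 1) {j : ℕ} (ha : a ≤ j) :
    Summable (Hterm q x (j + 1) a) := by
  obtain ⟨C, hC⟩ := exists_norm_chainWeight_le hq (x ^ 2) a
  rw [Hterm_eq_chainProd (QGeneric.of_norm_lt_one hq.le hq) x ha]
  exact summable_chainProd (summable_norm_qPoch_mul_pow hq hx) (summable_norm_sq_pow_mul hx)
    (fun i => hC (i + 1)) j

theorem tsum_Hterm (hq : ‖q‖ < 1) (hx : ‖x‖ < 1) {j : ℕ} (ha : a ≤ j) :
    ∑' k, Hterm q x (j + 1) a k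
      = ∑' n, qPoch q x (n + 1) * x ^ n *
          nestedSum (fun i => chainWeight q (x ^ 2) a (i + 1)) j n := by
  obtain ⟨C, hC⟩ := exists_norm_chainWeight_le hq (x ^ 2) a
  rw [Hterm_eq_chainProd (QGeneric.of_norm_lt_one hq.le hq) x ha]
  exact tsum_chainProd (summable_norm_qPoch_mul_pow hq hx) (summable_norm_sq_pow_mul hx)
    (fun i => hC (i + 1)) j

lemma nestedSum_chainWeight_of_lt (hq : QGeneric q q) (hy : QGeneric q y) {j : ℕ} (hj : j < a)
    (n : ℕ) :
    nestedSum (fun i => chainWeight q y a (i + 1)) j n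
      = qPoch q q n *
        baileyTransform q y (fun r => unitAlpha q y r * baileyFactor q y r ^ (j + 1)) n := by
  induction j generalizing n with
  | zero =>
    simp only [zero_add, pow_one]
    exact (qPoch_mul_baileyTransform_unitAlpha_mul_baileyFactor hq hy n).symm
  | succ j ih =>
    simp only [nestedSum, chainWeight_of_lt hj, ih (Nat.lt_of_succ_lt hj)]
    rw [tsum_baileyFactor_mul_qBinom hq hy.mul_q]
    simp only [mul_assoc, ← pow_succ]

/-- The factor of the `α`-sequence produced by `a + 1` Bailey steps relative to `y`, the change
of parameter from `y` to `yq`, and `d` Bailey steps relative to `yq`. -/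
noncomputable def latticeFactor (q y : ℂ) (a d r : ℕ) : ℂ :=
  (baileyFactor q y r ^ (a + 1) - baileyFactor q y (r + 1) ^ (a + 1)) * baileyFactor q (y * q) r ^ d

lemma nestedSum_chainWeight_self (hq : QGeneric q q) (hy : QGeneric q y) (a n : ℕ) :
    nestedSum (fun i => chainWeight q y a (i + 1)) a n
      = qPoch q q n *
        baileyTransform q (y * q) (fun r => shiftCoeff q y r * latticeFactor q y a 0 r) n := by
  have hsum : nestedSum (fun i => chainWeight q y a (i + 1)) a n = qPoch q q (n + 1) *
      baileyTransform q y (fun r => unitAlpha q y r * baileyFactor q y r ^ (a + 1)) (n + 1) := by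
    rcases a with _ | a
    · simp only [zero_add, pow_one]
      exact (qPoch_mul_baileyTransform_unitAlpha_mul_baileyFactor hq hy (n + 1)).symm
    · simp only [nestedSum, chainWeight_self,
        nestedSum_chainWeight_of_lt hq hy a.lt_succ_self]
      rw [tsum_baileyFactor_mul_qBinom hq hy.mul_q]
      simp only [mul_assoc, ← pow_succ]
  simp only [latticeFactor, pow_zero, mul_one]
  rw [hsum, qPoch_self_succ, mul_assoc, baileyTransform_unitAlpha_mul hq hy]

theorem nestedSum_chainWeight (hq : QGeneric q q) (hy : QGeneric q y) (a d n : ℕ) :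
    nestedSum (fun i => chainWeight q y a (i + 1)) (a + d) n
      = qPoch q q n *
        baileyTransform q (y * q) (fun r => shiftCoeff q y r * latticeFactor q y a d r) n := by
  induction d generalizing n with
  | zero => exact nestedSum_chainWeight_self hq hy a n
  | succ d ih =>
    rw [← add_assoc]
    simp only [nestedSum, chainWeight_of_gt (show a < a + d + 1 by omega), ih]
    rw [tsum_baileyFactor_mul_qBinom hq hy.mul_q.mul_q]
    simp only [latticeFactor, mul_assoc, ← pow_succ]

lemma summable_norm_shiftCoeff_mul_latticeFactor (hq : ‖q‖ < 1) (hy : ‖y‖ < 1) (a d : ℕ) :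
    Summable fun r => ‖shiftCoeff q y r * latticeFactor q y a d r‖ := by
  obtain ⟨C, hC⟩ := exists_norm_shiftCoeff_le hq y
  have hpow {s r : ℕ} (h : r ≤ s) : ‖baileyFactor q y s ^ (a + 1)‖ ≤ ‖y‖ ^ r := by
    rw [norm_pow]
    calc ‖baileyFactor q y s‖ ^ (a + 1) ≤ (‖y‖ ^ s) ^ (a + 1) := by
          gcongr
          exact norm_baileyFactor_le hq.le y s
      _ ≤ ‖y‖ ^ r := by
          rw [← pow_mul]
          exact pow_le_pow_of_le_one (norm_nonneg y) hy.le (by nlinarith)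
  have hone (r : ℕ) : ‖baileyFactor q (y * q) r ^ d‖ ≤ 1 := by
    rw [norm_pow]
    refine pow_le_one₀ (norm_nonneg _) ((norm_baileyFactor_le hq.le _ r).trans ?_)
    refine pow_le_one₀ (norm_nonneg _) ?_
    rw [norm_mul]
    exact mul_le_one₀ hy.le (norm_nonneg q) hq.le
  refine .of_nonneg_of_le (fun _ => norm_nonneg _) (fun r => ?_)
    ((((summable_geometric_of_lt_one (norm_nonneg y) hy).mul_left 2).mul_right 1).mul_left C)
  rw [latticeFactor, norm_mul, norm_mul, two_mul]
  have hC₀ := (norm_nonneg _).trans (hC 0)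
  gcongr
  exacts [hC r, (norm_sub_le _ _).trans (add_le_add (hpow le_rfl) (hpow r.le_succ)), hone r]

theorem tsum_Hterm_eq_tsum_latticeFactor (hq : ‖q‖ < 1) (hx : ‖x‖ < 1) (a d : ℕ) :
    ∑' k, Hterm q x (a + d + 1) a k
      = ∑' r, (-1) ^ r * x ^ r * q ^ (r + 1).choose 2 * latticeFactor q (x ^ 2) a d r := by
  have hy : ‖x ^ 2‖ < 1 := by simpa using pow_lt_one₀ (norm_nonneg x) hx two_ne_zero
  have hgen := QGeneric.of_norm_lt_one hq.le hq
  have hgen_y := QGeneric.of_norm_lt_one hq.le hy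
  calc ∑' k, Hterm q x (a + d + 1) a k
      = ∑' n, conjugateDelta q x n * baileyTransform q (x ^ 2 * q)
          (fun r => shiftCoeff q (x ^ 2) r * latticeFactor q (x ^ 2) a d r) n := by
        rw [tsum_Hterm hq hx (Nat.le_add_right a d)]
        simp only [nestedSum_chainWeight hgen hgen_y, conjugateDelta, mul_assoc]
    _ = ∑' r, shiftCoeff q (x ^ 2) r * latticeFactor q (x ^ 2) a d r *
          ∑' n, conjugateTerm q x r n :=
        tsum_mul_baileyTransform hq hgen_y.mul_q.mul_q (summable_norm_conjugateDelta hq hx)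
          (summable_norm_shiftCoeff_mul_latticeFactor hq hy a d)
    _ = _ := tsum_congr fun r => by
        rw [mul_right_comm, shiftCoeff_mul_tsum_conjugateTerm hq hx hgen_y.mul_q]

end MultipleSeries

section ThetaSeries

open Finset

variable {q x : ℂ} {m a : ℕ}

theorem hasSum_of_support_subset_residues {M : Type*} [AddCommMonoid M] [TopologicalSpace M]
    [ContinuousAdd M] {f : ℕ → M} {N u v : ℕ} (hu : u < N) (hv : v < N) (huv : u ≠ v)
    (hf : ∀ n, f n ≠ 0 → n % N = u ∨ n % N = v) {s t : M}
    (hs : HasSum (fun r => f (N * r + u)) s) (ht : HasSum (fun r => f (N * r + v)) t) :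
    HasSum f (s + t) := by
  have hinj (w : ℕ) : Function.Injective fun r => N * r + w := fun r r' h =>
    Nat.eq_of_mul_eq_mul_left (by omega) (Nat.add_right_cancel h)
  have hmod {w : ℕ} (hw : w < N) (r : ℕ) : (N * r + w) % N = w := by
    rw [Nat.mul_add_mod, Nat.mod_eq_of_lt hw]
  have hdisj : Disjoint (Set.range fun r => N * r + u) (Set.range fun r => N * r + v) := by
    rw [Set.disjoint_left]
    rintro _ ⟨r, rfl⟩ ⟨r', h⟩
    exact huv (by rw [← hmod hu r, ← hmod hv r', show N * r' + v = N * r + u from h])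
  refine (hasSum_subtype_iff_of_support_subset fun n hn => ?_).mp
    (HasSum.add_disjoint hdisj ((hinj u).hasSum_range_iff.mpr hs)
      ((hinj v).hasSum_range_iff.mpr ht))
  rcases hf n hn with h | h
  · exact .inl ⟨n / N, by simp only [← h, Nat.div_add_mod]⟩
  · exact .inr ⟨n / N, by simp only [← h, Nat.div_add_mod]⟩

lemma chiGen_mul_add (ha : a < m) (l : ℕ) {s : ℕ} (hs : s < 8 * m + 4) :
    chiGen m a ((8 * m + 4) * l + s)
      = if s = 2 * m - 2 * a - 1 ∨ s = 6 * m + 2 * a + 5 then 1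
        else if s = 2 * m + 2 * a + 3 ∨ s = 6 * m - 2 * a + 1 then -1 else 0 := by
  rw [chiGen, Nat.mul_add_mod, Nat.mod_eq_of_lt hs, Nat.mod_eq_of_lt (by omega),
    Nat.mod_eq_of_lt (by omega), Nat.mod_eq_of_lt (by omega), Nat.mod_eq_of_lt (by omega)]
  split_ifs <;> first | rfl | omega

lemma chiGen_half_period_mul_add (ha : a < m) (r : ℕ) {s : ℕ} (hs : s < 4 * m + 2) :
    chiGen m a ((4 * m + 2) * r + s)
      = (-1) ^ r *
        if s = 2 * m - 2 * a - 1 then 1 else if s = 2 * m + 2 * a + 3 then -1 else 0 := by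
  obtain ⟨l, rfl | rfl⟩ := r.even_or_odd'
  · rw [show (4 * m + 2) * (2 * l) + s = (8 * m + 4) * l + s by ring,
      chiGen_mul_add ha l (by omega), pow_mul, neg_one_sq, one_pow, one_mul]
    split_ifs <;> first | rfl | omega
  · rw [show (4 * m + 2) * (2 * l + 1) + s = (8 * m + 4) * l + (s + (4 * m + 2)) by ring,
      chiGen_mul_add ha l (by omega), pow_succ, pow_mul, neg_one_sq, one_pow, one_mul]
    split_ifs <;> first | rfl | omega

/-- The summand `χ(n) q^{(n² - (2m-2a-1)²)/(8(2m+1))} x^{(n - (2m-2a-1))/2}` of the theta series;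
the truncated subtractions and divisions are exact wherever `χ(n) ≠ 0`. -/
noncomputable def chiTerm (q x : ℂ) (m a n : ℕ) : ℂ :=
  (chiGen m a n : ℂ) * q ^ ((n ^ 2 - (2 * m - 2 * a - 1) ^ 2) / (8 * (2 * m + 1))) *
    x ^ ((n - (2 * m - 2 * a - 1)) / 2)

lemma chiTerm_two_mul_add {E F : ℕ}
    (h : F * (F + (2 * m - 2 * a - 1)) = 2 * (2 * m + 1) * E) (q x : ℂ) :
    chiTerm q x m a (2 * F + (2 * m - 2 * a - 1))
      = chiGen m a (2 * F + (2 * m - 2 * a - 1)) * q ^ E * x ^ F := by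
  have hE : (2 * F + (2 * m - 2 * a - 1)) ^ 2
      = 8 * (2 * m + 1) * E + (2 * m - 2 * a - 1) ^ 2 := by
    linear_combination 4 * h
  rw [chiTerm, hE, Nat.add_sub_cancel, Nat.mul_div_cancel_left _ (by omega), Nat.add_sub_cancel,
    Nat.mul_div_cancel_left _ two_pos]

/-- The terms of the theta series attached to the residue `2m-2a-1` (for `s = r`) and, up to sign,
to the residue `2m+2a+3` (for `s = r + 1`) modulo `4m+2`, where `m = a + d + 1`. -/
noncomputable def latticeTerm (q x : ℂ) (a d s r : ℕ) : ℂ :=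
  (-1) ^ r * q ^ ((r + 1).choose 2 + s ^ 2 * (a + 1) + (r ^ 2 + r) * d) *
    x ^ (r + 2 * s * (a + 1) + 2 * r * d)

lemma latticeTerm_sub (q x : ℂ) (a d r : ℕ) :
    latticeTerm q x a d r r - latticeTerm q x a d (r + 1) r
      = (-1) ^ r * x ^ r * q ^ (r + 1).choose 2 * latticeFactor q (x ^ 2) a d r := by
  simp only [latticeTerm, latticeFactor, baileyFactor]
  ring

lemma summable_latticeTerm (hq : ‖q‖ < 1) (hx : ‖x‖ < 1) (a d : ℕ) (s : ℕ → ℕ) :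
    Summable fun r => latticeTerm q x a d (s r) r := by
  refine .of_norm_bounded (summable_geometric_of_lt_one (norm_nonneg x) hx) fun r => ?_
  rw [latticeTerm, norm_mul, norm_mul, norm_pow, norm_neg, norm_one, one_pow, one_mul, norm_pow,
    norm_pow]
  refine (mul_le_of_le_one_left (by positivity) (pow_le_one₀ (norm_nonneg q) hq.le)).trans ?_
  exact pow_le_pow_of_le_one (norm_nonneg x) hx.le (by omega)

lemma two_mul_succ_choose_two (r : ℕ) : 2 * (r + 1).choose 2 = r * (r + 1) := by
  induction r with
  | zero => rfl
  | succ r ih => rw [succ_choose_two, mul_add, ih]; ring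

lemma chiTerm_left_residue (q x : ℂ) (a d r : ℕ) :
    chiTerm q x (a + d + 1) a
        ((4 * (a + d + 1) + 2) * r + (2 * (a + d + 1) - 2 * a - 1))
      = latticeTerm q x a d r r := by
  have hu : 2 * (a + d + 1) - 2 * a - 1 = 2 * d + 1 := by omega
  have hF : (4 * (a + d + 1) + 2) * r = 2 * (r + 2 * r * (a + 1) + 2 * r * d) := by ring
  have hE : (r + 2 * r * (a + 1) + 2 * r * d) *
        (r + 2 * r * (a + 1) + 2 * r * d + (2 * (a + d + 1) - 2 * a - 1))
      = 2 * (2 * (a + d + 1) + 1) * ((r + 1).choose 2 + r ^ 2 * (a + 1) + (r ^ 2 + r) * d) := by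
    rw [hu]
    linear_combination (2 * (a + d + 1) + 1) * (two_mul_succ_choose_two r).symm
  rw [hF, chiTerm_two_mul_add hE, ← hF, chiGen_half_period_mul_add (by omega) r (by omega),
    if_pos rfl, latticeTerm]
  push_cast
  ring

lemma chiTerm_right_residue (q x : ℂ) (a d r : ℕ) :
    chiTerm q x (a + d + 1) a ((4 * (a + d + 1) + 2) * r + (2 * (a + d + 1) + 2 * a + 3))
      = -latticeTerm q x a d (r + 1) r := by
  have hu : 2 * (a + d + 1) - 2 * a - 1 = 2 * d + 1 := by omega
  have hF : (4 * (a + d + 1) + 2) * r + (2 * (a + d + 1) + 2 * a + 3)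
      = 2 * (r + 2 * (r + 1) * (a + 1) + 2 * r * d) + (2 * (a + d + 1) - 2 * a - 1) := by
    rw [hu]
    ring
  have hE : (r + 2 * (r + 1) * (a + 1) + 2 * r * d) *
        (r + 2 * (r + 1) * (a + 1) + 2 * r * d + (2 * (a + d + 1) - 2 * a - 1))
      = 2 * (2 * (a + d + 1) + 1) *
        ((r + 1).choose 2 + (r + 1) ^ 2 * (a + 1) + (r ^ 2 + r) * d) := by
    rw [hu]
    linear_combination (2 * (a + d + 1) + 1) * (two_mul_succ_choose_two r).symm
  rw [hF, chiTerm_two_mul_add hE, ← hF, chiGen_half_period_mul_add (by omega) r (by omega),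
    if_neg (by omega), if_pos rfl, latticeTerm]
  push_cast
  ring

theorem hasSum_chiTerm (hq : ‖q‖ < 1) (hx : ‖x‖ < 1) (a d : ℕ) :
    HasSum (chiTerm q x (a + d + 1) a)
      (∑' r, (-1) ^ r * x ^ r * q ^ (r + 1).choose 2 * latticeFactor q (x ^ 2) a d r) := by
  have hs : Summable fun r => latticeTerm q x a d r r :=
    summable_latticeTerm hq hx a d fun r => r
  have ht : Summable fun r => latticeTerm q x a d (r + 1) r :=
    summable_latticeTerm hq hx a d fun r => r + 1
  simp only [← latticeTerm_sub]
  rw [hs.tsum_sub ht, sub_eq_add_neg]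
  refine hasSum_of_support_subset_residues (N := 4 * (a + d + 1) + 2)
    (u := 2 * (a + d + 1) - 2 * a - 1) (v := 2 * (a + d + 1) + 2 * a + 3)
    (by omega) (by omega) (by omega) (fun n hn => ?_) ?_ ?_
  · contrapose! hn
    rw [chiTerm, ← Nat.div_add_mod n (4 * (a + d + 1) + 2),
      chiGen_half_period_mul_add (by omega) _ (Nat.mod_lt _ (by omega)), if_neg hn.1, if_neg hn.2]
    simp
  · simpa only [chiTerm_left_residue] using hs.hasSum
  · simpa only [chiTerm_right_residue] using ht.hasSum.neg

end ThetaSeries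

theorem stmt_8 (m a : ℕ) (hm : 1 ≤ m) (ha : a < m) (q x : ℂ)
    (hq : ‖q‖ < 1) (hx : ‖x‖ < 1) :
    Summable (Hterm q x m a) ∧
    Summable (fun n : ℕ => (chiGen m a n : ℂ) *
      q ^ ((n ^ 2 - (2 * m - 2 * a - 1) ^ 2) / (8 * (2 * m + 1))) *
      x ^ ((n - (2 * m - 2 * a - 1)) / 2)) ∧
    ∑' k : Fin m → ℕ, Hterm q x m a k
      = ∑' n : ℕ, (chiGen m a n : ℂ) *
          q ^ ((n ^ 2 - (2 * m - 2 * a - 1) ^ 2) / (8 * (2 * m + 1))) *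
          x ^ ((n - (2 * m - 2 * a - 1)) / 2) := by
  obtain ⟨d, rfl⟩ := Nat.exists_eq_add_of_lt ha
  have htheta := hasSum_chiTerm hq hx a d
  refine ⟨summable_Hterm hq hx (Nat.le_add_right a d), htheta.summable, ?_⟩
  rw [tsum_Hterm_eq_tsum_latticeFactor hq hx a d]
  exact htheta.tsum_eq.symm
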